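/- arXiv:1105.0405 — 2 statements merged into one kernel-verified Lean document; each statement's English description precedes it below -/
import Mathlib

section
/- Let A be a topological space homeomorphic to S¹ × [0,1] via a homeomorphism h, with boundary circles J₁ = h(S¹ × {0}) and J₂ = h(S¹ × {1}). Let C be a closed subset of A contained in A \ (J₁ ∪ J₂) such that J₁ and J₂ lie in different connected components of A \ C. Then some connected component C' of C has the property that J₁ and J₂ lie in different connected components of A \ C'. -/
/-!
Among the closed subsets of `C` that separate `J₁` from `J₂`, Zorn's lemma gives a minimal one, `K`.
If `K` were the disjoint union of two nonempty closed sets `S` and `T`, neither of them would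
separate. Let `U` be the union of the components of `(S ∪ T)ᶜ` that meet `J₁`, and let `u` be a
Urysohn function with `u = 0` on `S` and `u = 1` on `T`. Since `frontier U ⊆ S ∪ T`, the map equal
to `u` modulo `1` on `U` and to `0` elsewhere is continuous; as the cylinder deformation retracts
onto `J₂`, it lifts to a real function `F` vanishing on `J₂`. Following `F` from `J₂` to `J₁` in the
complement of `T` gives `F = u` at some point of `J₁`; doing so in the complement of `S` gives
`F = u - 1`. This is impossible, because `F - u` is constant on the connected set `J₁`. Hence `K` is
connected and lies in a single component of `C`.
-/

open Set Topology

section Components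

variable {X : Type*} [TopologicalSpace X] [LocallyConnectedSpace X]

theorem connectedComponentIn_iUnion_of_directed {ι : Type*} {U : ι → Set X}
    (hU : ∀ i, IsOpen (U i)) (hdir : Directed (· ⊆ ·) U) (a : X) :
    connectedComponentIn (⋃ i, U i) a = ⋃ i, connectedComponentIn (U i) a := by
  refine Subset.antisymm ?_ (iUnion_subset fun i => connectedComponentIn_mono a (subset_iUnion U i))
  by_cases ha : a ∈ ⋃ i, U i
  swap
  · simp only [connectedComponentIn_eq_empty ha, empty_subset]
  obtain ⟨i₀, hi₀⟩ := mem_iUnion.1 ha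
  refine isPreconnected_connectedComponentIn.subset_of_closure_inter_subset
    (isOpen_iUnion fun i => (hU i).connectedComponentIn)
    ⟨a, mem_connectedComponentIn ha, mem_iUnion.2 ⟨i₀, mem_connectedComponentIn hi₀⟩⟩ ?_
  rintro y ⟨hy_closure, hy⟩
  obtain ⟨j, hyj⟩ := mem_iUnion.1 (connectedComponentIn_subset _ _ hy)
  obtain ⟨z, hzy, hza⟩ := mem_closure_iff.1 hy_closure _ (hU j).connectedComponentIn
    (mem_connectedComponentIn hyj)
  obtain ⟨i, hzi⟩ := mem_iUnion.1 hza
  obtain ⟨k, hik, hjk⟩ := hdir i j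
  have hak : connectedComponentIn (U k) a = connectedComponentIn (U k) y :=
    (connectedComponentIn_eq (connectedComponentIn_mono a hik hzi)).trans
      (connectedComponentIn_eq (connectedComponentIn_mono y hjk hzy)).symm
  exact mem_iUnion.2 ⟨k, hak ▸ mem_connectedComponentIn (hjk hyj)⟩

theorem frontier_biUnion_connectedComponentIn_subset {F : Set X} (hF : IsOpen F) (J : Set X) :
    frontier (⋃ a ∈ J, connectedComponentIn F a) ⊆ Fᶜ := by
  intro x hx hxF
  rw [(isOpen_biUnion fun _ _ => hF.connectedComponentIn).frontier_eq] at hx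
  obtain ⟨z, hzx, hz⟩ := mem_closure_iff.1 hx.1 _ hF.connectedComponentIn
    (mem_connectedComponentIn hxF)
  obtain ⟨a, ha, hza⟩ := mem_iUnion₂.1 hz
  have hax : connectedComponentIn F a = connectedComponentIn F x :=
    (connectedComponentIn_eq hza).trans (connectedComponentIn_eq hzx).symm
  exact hx.2 (mem_iUnion₂.2 ⟨a, ha, hax ▸ mem_connectedComponentIn hxF⟩)

end Components

/-- `S` separates `J₁` from `J₂`: no connected component of the complement of `S` meets both.
For `a ∈ S` the set `connectedComponentIn Sᶜ a` is empty, so only `J₁ \ S` and `J₂ \ S` matter. -/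
def Separates {X : Type*} [TopologicalSpace X] (S J₁ J₂ : Set X) : Prop :=
  ∀ a ∈ J₁, ∀ b ∈ J₂, b ∉ connectedComponentIn Sᶜ a

/-- Every map to the circle that vanishes on `J` lifts to a real function that vanishes on `J`.
This is the form in which the vanishing of `H¹(X, J; ℤ)` is used. -/
def LiftsCircleMapsRel {X : Type*} [TopologicalSpace X] (J : Set X) : Prop :=
  ∀ f : C(X, UnitAddCircle), (∀ x ∈ J, f x = 0) →
    ∃ F : C(X, ℝ), (∀ x, (F x : UnitAddCircle) = f x) ∧ ∀ x ∈ J, F x = 0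

section Separation

variable {X : Type*} [TopologicalSpace X] {J₁ J₂ S T C K : Set X}

theorem Separates.mono (h : Separates S J₁ J₂) (hST : S ⊆ T) : Separates T J₁ J₂ :=
  fun a ha b hb hab => h a ha b hb (connectedComponentIn_mono a (compl_subset_compl.2 hST) hab)

theorem not_separates_empty [PreconnectedSpace X] (hJ₁ : J₁.Nonempty) (hJ₂ : J₂.Nonempty) :
    ¬ Separates ∅ J₁ J₂ := by
  obtain ⟨a, ha⟩ := hJ₁
  obtain ⟨b, hb⟩ := hJ₂
  intro h
  apply h a ha b hb
  rw [compl_empty, connectedComponentIn_univ, PreconnectedSpace.connectedComponent_eq_univ]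
  exact mem_univ b

theorem Separates.iInter_of_directed [LocallyConnectedSpace X] {ι : Type*} {K : ι → Set X}
    (hK : ∀ i, IsClosed (K i)) (hdir : Directed (· ⊇ ·) K) (h : ∀ i, Separates (K i) J₁ J₂) :
    Separates (⋂ i, K i) J₁ J₂ := by
  intro a ha b hb hab
  rw [compl_iInter, connectedComponentIn_iUnion_of_directed (fun i => (hK i).isOpen_compl)
    (fun i j => (hdir i j).imp fun _ => .imp compl_subset_compl.2 compl_subset_compl.2)] at hab
  obtain ⟨i, hi⟩ := mem_iUnion.1 hab
  exact h i a ha b hb hi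

theorem Separates.exists_minimal_subset [LocallyConnectedSpace X] (hC : IsClosed C)
    (h : Separates C J₁ J₂) :
    ∃ K ⊆ C, Minimal (fun K => IsClosed K ∧ Separates K J₁ J₂) K := by
  refine zorn_superset_nonempty {K | IsClosed K ∧ Separates K J₁ J₂}
    (fun 𝒦 h𝒦 hchain _ => ⟨⋂₀ 𝒦, ⟨isClosed_sInter fun K hK => (h𝒦 hK).1, ?_⟩,
      fun _ => sInter_subset_of_mem⟩) C ⟨hC, h⟩
  have hdir : Directed (· ⊇ ·) ((↑) : 𝒦 → Set X) := fun K L =>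
    (hchain.total K.2 L.2).elim (fun h => ⟨K, subset_rfl, h⟩) fun h => ⟨L, h, subset_rfl⟩
  rw [sInter_eq_iInter]
  exact .iInter_of_directed (fun K => (h𝒦 K.2).1) hdir fun K => (h𝒦 K.2).2

theorem LiftsCircleMapsRel.exists_lift_indicator {U : Set X} {u : C(X, ℝ)}
    (hJ₂ : LiftsCircleMapsRel J₂) (hUJ₂ : Disjoint U J₂)
    (hu : ∀ x ∈ frontier U, (u x : UnitAddCircle) = 0) :
    ∃ F : C(X, ℝ), (∀ x, (F x : UnitAddCircle) = U.indicator (fun x => (u x : UnitAddCircle)) x) ∧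
      ∀ b ∈ J₂, F b = 0 :=
  hJ₂ ⟨U.indicator fun x => (u x : UnitAddCircle), Continuous.indicator hu (by fun_prop)⟩
    fun _ hb => by simp [hUJ₂.notMem_of_mem_right hb]

theorem exists_lift_eq_of_not_separates {E B : Type*} [TopologicalSpace E]
    [TopologicalSpace B] {p : E → B} (hp : IsCoveringMap p) {F g : X → E}
    (hF : ContinuousOn F Sᶜ) (hg : ContinuousOn g Sᶜ) (hFg : EqOn (p ∘ F) (p ∘ g) Sᶜ)
    (hJ₂ : EqOn F g J₂) (hS : ¬ Separates S J₁ J₂) : ∃ a ∈ J₁ \ S, F a = g a := by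
  simp only [Separates, not_forall, not_not] at hS
  obtain ⟨a, ha, b, hb, hab⟩ := hS
  have haS : a ∈ Sᶜ := connectedComponentIn_nonempty_iff.1 ⟨b, hab⟩
  have hsub := connectedComponentIn_subset Sᶜ a
  exact ⟨a, ⟨ha, haS⟩, hp.eqOn_of_comp_eqOn isPreconnected_connectedComponentIn (hF.mono hsub)
    (hg.mono hsub) (hFg.mono hsub) hab (hJ₂ hb) (mem_connectedComponentIn haS)⟩

/-- The function `U.indicator (u - r)` is continuous off `S` and lifts the same circle map as `F`,
so the two agree on any component of `Sᶜ` that joins `J₂` to `J₁`. -/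
theorem exists_lift_indicator_eq_sub {U : Set X} {F u : C(X, ℝ)} {r : ℝ}
    (hF : ∀ x, (F x : UnitAddCircle) = U.indicator (fun x => (u x : UnitAddCircle)) x)
    (hFJ₂ : ∀ b ∈ J₂, F b = 0) (hUJ₂ : Disjoint U J₂) (hr : (r : UnitAddCircle) = 0)
    (hur : ∀ x ∈ (frontier U ∪ J₁ \ U) \ S, u x = r) (hS : ¬ Separates S J₁ J₂) :
    ∃ a ∈ J₁, F a = u a - r := by
  classical
  have hg : ContinuousOn (U.indicator fun x => u x - r) Sᶜ := by
    refine ContinuousOn.piecewise (fun x hx => ?_) (by fun_prop) continuousOn_const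
    simp [hur x ⟨.inl hx.2, hx.1⟩]
  have hFg : EqOn (((↑) : ℝ → UnitAddCircle) ∘ F) ((↑) ∘ U.indicator fun x => u x - r) Sᶜ := by
    intro x _
    by_cases hx : x ∈ U <;> simp [hF, hx, hr]
  have hFgJ₂ : EqOn F (U.indicator fun x => u x - r) J₂ := fun b hb => by
    simp [hFJ₂ b hb, hUJ₂.notMem_of_mem_right hb]
  obtain ⟨a, ⟨haJ₁, haS⟩, ha⟩ := exists_lift_eq_of_not_separates (AddCircle.isCoveringMap_coe 1)
    F.continuous.continuousOn hg hFg hFgJ₂ hS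
  refine ⟨a, haJ₁, ha.trans ?_⟩
  by_cases haU : a ∈ U
  · exact indicator_of_mem haU _
  · rw [indicator_of_notMem haU, hur a ⟨.inr ⟨haJ₁, haU⟩, haS⟩, sub_self]

theorem Separates.or_of_union [NormalSpace X] [LocallyConnectedSpace X]
    (hJ₁ : IsPreconnected J₁) (hJ₂ : LiftsCircleMapsRel J₂) (hS : IsClosed S) (hT : IsClosed T)
    (hST : Disjoint S T) (hsep : Separates (S ∪ T) J₁ J₂) :
    Separates S J₁ J₂ ∨ Separates T J₁ J₂ := by
  by_contra! hno
  set U := ⋃ a ∈ J₁, connectedComponentIn (S ∪ T)ᶜ a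
  have hUJ₂ : Disjoint U J₂ :=
    disjoint_iUnion₂_left.2 fun a ha => disjoint_right.2 fun b hb => hsep a ha b hb
  have hbdry : frontier U ∪ J₁ \ U ⊆ S ∪ T := by
    refine union_subset ?_ fun a ⟨ha, haU⟩ => ?_
    · simpa only [compl_compl] using
        frontier_biUnion_connectedComponentIn_subset (hS.union hT).isOpen_compl J₁
    · by_contra haST
      exact haU (mem_iUnion₂.2 ⟨a, ha, mem_connectedComponentIn haST⟩)
  obtain ⟨u, huS, huT, -⟩ := exists_continuous_zero_one_of_isClosed hS hT hST
  have hu : ∀ x ∈ S ∪ T, (u x : UnitAddCircle) = 0 := by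
    rintro x (hx | hx)
    · simp [huS hx]
    · simp [huT hx]
  obtain ⟨F, hF, hFJ₂⟩ := hJ₂.exists_lift_indicator hUJ₂ fun x hx => hu x (hbdry (.inl hx))
  have hFu : ∀ a ∈ J₁, (F a : UnitAddCircle) = u a := by
    intro a ha
    by_cases haU : a ∈ U
    · exact (hF a).trans (indicator_of_mem haU _)
    · rw [hu a (hbdry (.inr ⟨ha, haU⟩))]
      exact (hF a).trans (indicator_of_notMem haU _)
  obtain ⟨a, ha, hFa⟩ : ∃ a ∈ J₁, F a = u a - 0 :=
    exists_lift_indicator_eq_sub hF hFJ₂ hUJ₂ (by simp)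
      (fun x hx => huS ((hbdry hx.1).resolve_right hx.2)) hno.2
  obtain ⟨b, hb, hFb⟩ : ∃ b ∈ J₁, F b = u b - 1 :=
    exists_lift_indicator_eq_sub hF hFJ₂ hUJ₂ (AddCircle.coe_period 1)
      (fun x hx => huT ((hbdry hx.1).resolve_left hx.2)) hno.1
  have hFub : F b = u b := (AddCircle.isCoveringMap_coe 1).eqOn_of_comp_eqOn hJ₁
    F.continuous.continuousOn u.continuous.continuousOn hFu ha (hFa.trans (sub_zero _)) hb
  linarith

theorem isPreconnected_of_minimal_separates [NormalSpace X] [LocallyConnectedSpace X]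
    (hJ₁ : IsPreconnected J₁) (hJ₂ : LiftsCircleMapsRel J₂)
    (hK : Minimal (fun K => IsClosed K ∧ Separates K J₁ J₂) K) : IsPreconnected K := by
  obtain ⟨hK_closed, hK_sep⟩ := hK.prop
  rw [isPreconnected_iff_subset_of_fully_disjoint_closed hK_closed]
  intro S T hS hT hKST hST
  have hsep : Separates (K ∩ S ∪ K ∩ T) J₁ J₂ := by
    rwa [← inter_union_distrib_left, inter_eq_left.2 hKST]
  have hKS := hK_closed.inter hS
  have hKT := hK_closed.inter hT
  refine (hsep.or_of_union hJ₁ hJ₂ hKS hKT (hST.mono inter_subset_right inter_subset_right)).imp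
    (fun h => ?_) fun h => ?_
  · exact (hK.le_of_le ⟨hKS, h⟩ inter_subset_left).trans inter_subset_right
  · exact (hK.le_of_le ⟨hKT, h⟩ inter_subset_left).trans inter_subset_right

theorem Separates.exists_connectedComponentIn [NormalSpace X] [LocallyConnectedSpace X]
    [PreconnectedSpace X] (hJ₁ : IsConnected J₁) (hJ₂n : J₂.Nonempty)
    (hJ₂ : LiftsCircleMapsRel J₂) (hC : IsClosed C) (hsep : Separates C J₁ J₂) :
    ∃ c ∈ C, Separates (connectedComponentIn C c) J₁ J₂ := by
  obtain ⟨K, hKC, hK⟩ := hsep.exists_minimal_subset hC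
  have hK_preconnected := isPreconnected_of_minimal_separates hJ₁.isPreconnected hJ₂ hK
  obtain ⟨c, hc⟩ : K.Nonempty := by
    rw [nonempty_iff_ne_empty]
    rintro rfl
    exact not_separates_empty hJ₁.nonempty hJ₂n hK.prop.2
  exact ⟨c, hKC hc, hK.prop.2.mono (hK_preconnected.subset_connectedComponentIn hc hKC)⟩

end Separation

section Cylinder

variable {Y A : Type*} [TopologicalSpace Y] [TopologicalSpace A]

theorem liftsCircleMapsRel_range_top (e : Y × unitInterval ≃ₜ A) :
    LiftsCircleMapsRel (range fun y => e (y, 1)) := by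
  intro f hf
  have cov := AddCircle.isCoveringMap_coe (1 : ℝ)
  -- Homotopy lifting starts from time `0`, so the interval is reversed to start at the top.
  let H : C(unitInterval × Y, UnitAddCircle) :=
    ⟨fun q => f (e (q.2, unitInterval.symm q.1)), by fun_prop⟩
  have H_zero : ∀ y, H (0, y) = ((ContinuousMap.const Y (0 : ℝ) y : ℝ) : UnitAddCircle) := by
    simp [H, hf]
  let H' := cov.liftHomotopy H (ContinuousMap.const Y 0) H_zero
  have hH' : ∀ q, (H' q : UnitAddCircle) = H q := congrFun (cov.liftHomotopy_lifts H _ H_zero)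
  have hH'_zero : ∀ y, H' (0, y) = 0 := cov.liftHomotopy_zero H _ H_zero
  refine ⟨⟨fun x => H' (unitInterval.symm (e.symm x).2, (e.symm x).1), by fun_prop⟩,
    fun x => ?_, ?_⟩
  · simp [hH', H]
  · rintro _ ⟨y, rfl⟩
    simp [hH'_zero]

theorem component_separates_annulus_general [ConnectedSpace Y] [LocallyConnectedSpace Y]
    [NormalSpace (Y × unitInterval)] (e : Y × unitInterval ≃ₜ A) {C : Set A} (hC : IsClosed C)
    (hsep : Separates C (range fun y => e (y, 0)) (range fun y => e (y, 1))) :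
    ∃ c ∈ C, Separates (connectedComponentIn C c)
      (range fun y => e (y, 0)) (range fun y => e (y, 1)) := by
  have : LocallyConnectedSpace unitInterval :=
    (isQuotientMap_projIcc (h := zero_le_one)).isCoinducing.locallyConnectedSpace
  have : LocallyConnectedSpace A := e.symm.locallyConnectedSpace
  have : NormalSpace A := e.symm.isClosedEmbedding.normalSpace
  have : PreconnectedSpace A := e.surjective.denseRange.preconnectedSpace e.continuous
  exact hsep.exists_connectedComponentIn (isConnected_range (by fun_prop)) (range_nonempty _)
    (liftsCircleMapsRel_range_top e) hC

end Cylinder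

instance connectedSpace_sphere_complex : ConnectedSpace (Metric.sphere (0 : ℂ) 1) :=
  isConnected_iff_connectedSpace.1
    (isConnected_sphere (by simp [Complex.rank_real_complex]) 0 zero_le_one)

instance locallyConnectedSpace_sphere_complex :
    LocallyConnectedSpace (Metric.sphere (0 : ℂ) 1) :=
  have : Fact (Module.finrank ℝ ℂ = 1 + 1) := ⟨Complex.finrank_real_complex⟩
  ChartedSpace.locallyConnectedSpace (EuclideanSpace ℝ (Fin 1)) _

/-- Lemma `alem1`: if a closed subset `C` of the interior of an annulus `A` separates the two
boundary circles `J₁` and `J₂`, then some connected component of `C` already separates `J₁`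
from `J₂` in `A`. -/
theorem component_separates_annulus
    (A : Type*) [TopologicalSpace A]
    (e : (Metric.sphere (0 : ℂ) 1 × Set.Icc (0 : ℝ) 1) ≃ₜ A)
    (J₁ J₂ C : Set A)
    (hJ₁ : J₁ = Set.range fun z : Metric.sphere (0 : ℂ) 1 =>
      e (z, ⟨0, Set.mem_Icc.mpr (by norm_num)⟩))
    (hJ₂ : J₂ = Set.range fun z : Metric.sphere (0 : ℂ) 1 =>
      e (z, ⟨1, Set.mem_Icc.mpr (by norm_num)⟩))
    (hC : IsClosed C) (hdisj : C ⊆ (J₁ ∪ J₂)ᶜ)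
    (hsep : ∀ a ∈ J₁, ∀ b ∈ J₂, b ∉ connectedComponentIn Cᶜ a) :
    ∃ c ∈ C, ∀ a ∈ J₁, ∀ b ∈ J₂, b ∉ connectedComponentIn (connectedComponentIn C c)ᶜ a := by
  subst hJ₁ hJ₂
  exact component_separates_annulus_general e hC hsep
end

section
/- Let X be a subset of ℝ² and let U be a closed disk (closed metric ball of positive radius) in ℝ² whose boundary circle is not contained in X. If α : S¹ → X is a loop with image contained in X ∩ int(U) that is not null-homotopic in X, then α cannot be freely homotoped in X out of U ∩ X: there is no continuous map F : S¹ × [0,1] → X with F(·, 0) = α and F(S¹ × {1}) ∩ U = ∅. -/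
/-!
Spread the homotopy over the plane by polar coordinates, with `α` on the unit circle and `g` on a
circle around the origin, and let `F` be the set of points outside the latter circle that are
mapped into the closed disk. The unit circle lies in one component of `F`. The component `C` of the
complement of that component which contains the origin has a connected frontier because the plane
is unicoherent, and this frontier is mapped into the boundary circle of the disk, since a point of
`F` mapped into the open disk is interior to `F`. As a point of that circle is missing from `X`, the
image of the frontier is an interval, so by Tietze's theorem the map can be redefined continuously
on all of `C`; the result fills in `α`.
-/

open Set Topology

section Unicoherence

variable {Z : Type*} [TopologicalSpace Z]

theorem eq_of_isPreconnected_of_coe_unitAddCircle_eq_zero {S : Set Z} (hS : IsPreconnected S)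
    {f : Z → ℝ} (hf : ContinuousOn f S) (hf0 : ∀ z ∈ S, (f z : UnitAddCircle) = 0) {x y : Z}
    (hx : x ∈ S) (hy : y ∈ S) : f x = f y := by
  have hdiscrete : IsDiscrete (range ((↑) : ℤ → ℝ)) :=
    ⟨Int.isClosedEmbedding_coe_real.isEmbedding.toHomeomorph.symm.isEmbedding.discreteTopology⟩
  refine hS.constant_of_mapsTo hdiscrete hf (fun z hz => ?_) hx hy
  obtain ⟨n, hn⟩ := (AddCircle.coe_eq_zero_iff 1).1 (hf0 z hz)
  exact ⟨n, by simpa using hn⟩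

/- `θ` is a lift of the circle-valued map glued from `0` on `P` and `u` on `Q`. -/
theorem exists_lift_of_coe_unitAddCircle_eq_zero_on_inter [SimplyConnectedSpace Z]
    [LocallyPathConnectedSpace Z] {P Q : Set Z} (hP : IsClosed P) (hQ : IsClosed Q)
    (hPQ : P ∪ Q = univ) (u : C(Z, ℝ)) (hu : ∀ z ∈ P ∩ Q, (u z : UnitAddCircle) = 0) :
    ∃ θ : C(Z, ℝ), (∀ z ∈ P, (θ z : UnitAddCircle) = 0) ∧
      ∀ z ∈ Q, (θ z : UnitAddCircle) = u z := by
  classical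
  let φ : Z → UnitAddCircle := P.piecewise 0 fun z => u z
  have hφP : EqOn φ 0 P := piecewise_eqOn P _ _
  have hφQ : EqOn φ (fun z => (u z : UnitAddCircle)) Q := fun z hz => by
    by_cases hzP : z ∈ P
    · exact (hφP hzP).trans (hu z ⟨hzP, hz⟩).symm
    · exact piecewise_eq_of_notMem _ _ _ hzP
  have hφ : Continuous φ := by
    rw [← continuousOn_univ, ← hPQ]
    refine ContinuousOn.union_of_isClosed (continuousOn_const.congr hφP) (ContinuousOn.congr ?_ hφQ)
      hP hQ
    exact ((AddCircle.continuous_mk' 1).comp u.continuous).continuousOn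
  obtain ⟨a⟩ : Nonempty Z := inferInstance
  obtain ⟨t, ht⟩ := QuotientAddGroup.mk_surjective (φ a)
  obtain ⟨θ, ⟨-, hθ⟩, -⟩ :=
    (AddCircle.isCoveringMap_coe (1 : ℝ)).existsUnique_continuousMap_lifts ⟨φ, hφ⟩ a t ht
  exact ⟨θ, fun z hz => (congrFun hθ z).trans (hφP hz), fun z hz => (congrFun hθ z).trans (hφQ hz)⟩

theorem isPreconnected_inter_of_isClosed_of_union_eq_univ [SimplyConnectedSpace Z]
    [LocallyPathConnectedSpace Z] [NormalSpace Z] {P Q : Set Z} (hP : IsPreconnected P)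
    (hQ : IsPreconnected Q) (hPc : IsClosed P) (hQc : IsClosed Q) (hPQ : P ∪ Q = univ) :
    IsPreconnected (P ∩ Q) := by
  rw [isPreconnected_closed_iff]
  rintro A B hA hB hAB ⟨a, haPQ, haA⟩ ⟨b, hbPQ, hbB⟩
  by_contra hne
  have hdisj : Disjoint ((P ∩ Q) ∩ A) ((P ∩ Q) ∩ B) :=
    Set.disjoint_left.2 fun z hzA hzB => hne ⟨z, hzA.1, hzA.2, hzB.2⟩
  obtain ⟨u, hu0, hu1, -⟩ := exists_continuous_zero_one_of_isClosed
    ((hPc.inter hQc).inter hA) ((hPc.inter hQc).inter hB) hdisj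
  have hu : ∀ z ∈ P ∩ Q, (u z : UnitAddCircle) = 0 := fun z hz => by
    rcases hAB hz with hzA | hzB
    · simp [hu0 ⟨hz, hzA⟩]
    · simp [hu1 ⟨hz, hzB⟩, AddCircle.coe_period]
  obtain ⟨θ, hθP, hθQ⟩ := exists_lift_of_coe_unitAddCircle_eq_zero_on_inter hPc hQc hPQ u hu
  have hθ : θ a = θ b := eq_of_isPreconnected_of_coe_unitAddCircle_eq_zero hP
    θ.continuous.continuousOn hθP haPQ.1 hbPQ.1
  have hθu : θ a - u a = θ b - u b := eq_of_isPreconnected_of_coe_unitAddCircle_eq_zero hQ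
    (f := fun z => θ z - u z) (by fun_prop)
    (fun z hz => by rw [AddCircle.coe_sub, hθQ z hz, sub_self]) haPQ.2 hbPQ.2
  have hua : u a = 0 := hu0 ⟨haPQ, haA⟩
  have hub : u b = 1 := hu1 ⟨hbPQ, hbB⟩
  linarith

end Unicoherence

section Components

variable {Z : Type*} [TopologicalSpace Z]

theorem isClosed_connectedComponentIn {F : Set Z} (hF : IsClosed F) (x : Z) :
    IsClosed (connectedComponentIn F x) := by
  by_cases hx : x ∈ F
  · exact isClosed_of_closure_subset <| isPreconnected_connectedComponentIn.closure
      |>.subset_connectedComponentIn (subset_closure (mem_connectedComponentIn hx))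
        (closure_minimal (connectedComponentIn_subset F x) hF)
  · simp [connectedComponentIn_eq_empty hx]

theorem interior_inter_connectedComponentIn_subset [LocallyConnectedSpace Z] (F : Set Z) (x : Z) :
    interior F ∩ connectedComponentIn F x ⊆ interior (connectedComponentIn F x) := by
  rintro z ⟨hzF, hz⟩
  rw [connectedComponentIn_eq hz, mem_interior_iff_mem_nhds]
  exact connectedComponentIn_mem_nhds (mem_interior_iff_mem_nhds.1 hzF)

theorem frontier_connectedComponentIn_subset_compl [LocallyConnectedSpace Z] {U : Set Z}
    (hU : IsOpen U) (x : Z) : frontier (connectedComponentIn U x) ⊆ Uᶜ := by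
  intro z hz hzU
  obtain ⟨w, hwz, hwx⟩ := mem_closure_iff.1 hz.1 _ hU.connectedComponentIn
    (mem_connectedComponentIn hzU)
  have hzx : z ∈ connectedComponentIn U x := by
    rw [connectedComponentIn_eq hwx, ← connectedComponentIn_eq hwz]
    exact mem_connectedComponentIn hzU
  exact hz.2 (hU.connectedComponentIn.interior_eq.symm ▸ hzx)

theorem isPreconnected_union_connectedComponentIn_compl [PreconnectedSpace Z]
    [LocallyConnectedSpace Z] {B : Set Z} (hB : IsPreconnected B) (hBc : IsClosed B)
    (hne : B.Nonempty) (x : Z) : IsPreconnected (B ∪ connectedComponentIn Bᶜ x) := by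
  set D := connectedComponentIn Bᶜ x
  have hfrontier : frontier D ⊆ B := by
    simpa only [compl_compl] using frontier_connectedComponentIn_subset_compl hBc.isOpen_compl x
  rcases D.eq_empty_or_nonempty with hDe | hDne
  · rwa [hDe, union_empty]
  have hDB : D ⊆ Bᶜ := connectedComponentIn_subset Bᶜ x
  have hD_ne_univ : D ≠ univ := fun h => hne.elim fun b hb => hDB (h ▸ mem_univ b) hb
  obtain ⟨w, hw⟩ := nonempty_frontier_iff.2 ⟨hDne, hD_ne_univ⟩
  have hunion : B ∪ closure D = B ∪ D := by
    rw [closure_eq_self_union_frontier, union_comm D, ← union_assoc,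
      union_eq_self_of_subset_right hfrontier]
  exact hunion ▸ hB.union w (hfrontier hw) (frontier_subset_closure hw)
    isPreconnected_connectedComponentIn.closure

theorem isPreconnected_compl_connectedComponentIn_compl [PreconnectedSpace Z]
    [LocallyConnectedSpace Z] {B : Set Z} (hB : IsPreconnected B) (hBc : IsClosed B)
    (hne : B.Nonempty) (x : Z) : IsPreconnected (connectedComponentIn Bᶜ x)ᶜ := by
  have hBsub : B ⊆ (connectedComponentIn Bᶜ x)ᶜ :=
    subset_compl_comm.1 (connectedComponentIn_subset Bᶜ x)
  obtain ⟨b, hb⟩ := hne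
  refine isPreconnected_of_forall b fun y hy => ?_
  by_cases hyB : y ∈ B
  · exact ⟨B, hBsub, hb, hyB, hB⟩
  refine ⟨B ∪ connectedComponentIn Bᶜ y, union_subset hBsub fun z hzy hzx => hy ?_, Or.inl hb,
    Or.inr (mem_connectedComponentIn hyB),
    isPreconnected_union_connectedComponentIn_compl hB hBc ⟨b, hb⟩ y⟩
  rw [connectedComponentIn_eq hzx, ← connectedComponentIn_eq hzy]
  exact mem_connectedComponentIn hyB

theorem isPreconnected_frontier_connectedComponentIn_compl [SimplyConnectedSpace Z]
    [LocallyPathConnectedSpace Z] [NormalSpace Z] {B : Set Z} (hB : IsPreconnected B)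
    (hBc : IsClosed B) (hne : B.Nonempty) (x : Z) :
    IsPreconnected (frontier (connectedComponentIn Bᶜ x)) := by
  have hopen : IsOpen (connectedComponentIn Bᶜ x) := hBc.isOpen_compl.connectedComponentIn
  rw [hopen.frontier_eq, sdiff_eq]
  exact isPreconnected_inter_of_isClosed_of_union_eq_univ
    isPreconnected_connectedComponentIn.closure
    (isPreconnected_compl_connectedComponentIn_compl hB hBc hne x) isClosed_closure
    hopen.isClosed_compl
    (eq_univ_of_subset (union_subset_union_left _ subset_closure) (union_compl_self _))

theorem exists_isOpen_isConnected_frontier_subset_frontier [SimplyConnectedSpace Z]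
    [LocallyPathConnectedSpace Z] [NormalSpace Z] {F : Set Z} (hF : IsClosed F) {x y : Z}
    (hx : x ∈ F) (hy : y ∉ F) :
    ∃ C : Set Z, IsOpen C ∧ y ∈ C ∧ Disjoint C (connectedComponentIn F x) ∧
      IsConnected (frontier C) ∧ frontier C ⊆ frontier F := by
  set K := connectedComponentIn F x
  have hK : IsClosed K := isClosed_connectedComponentIn hF x
  have hxK : x ∈ K := mem_connectedComponentIn hx
  have hCK : connectedComponentIn Kᶜ y ⊆ Kᶜ := connectedComponentIn_subset _ _
  have hyC : y ∈ connectedComponentIn Kᶜ y :=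
    mem_connectedComponentIn fun h => hy (connectedComponentIn_subset F x h)
  refine ⟨connectedComponentIn Kᶜ y, hK.isOpen_compl.connectedComponentIn, hyC,
    disjoint_left.2 hCK, ⟨nonempty_frontier_iff.2 ⟨⟨y, hyC⟩, fun h => hCK (h ▸ mem_univ x) hxK⟩,
      isPreconnected_frontier_connectedComponentIn_compl isPreconnected_connectedComponentIn hK
        ⟨x, hxK⟩ y⟩, fun z hz => ?_⟩
  have hzK : z ∈ K := by
    simpa only [compl_compl] using frontier_connectedComponentIn_subset_compl hK.isOpen_compl y hz
  refine ⟨subset_closure (connectedComponentIn_subset F x hzK), fun hzF => ?_⟩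
  have hzint : z ∈ interior K := interior_inter_connectedComponentIn_subset F x ⟨hzF, hzK⟩
  obtain ⟨w, hwK, hwC⟩ := mem_closure_iff.1 hz.1 _ isOpen_interior hzint
  exact hCK hwC (interior_subset hwK)

theorem frontier_inter_preimage_subset_preimage_inter {X : Type*} [TopologicalSpace X]
    {S U : Set Z} {A B : Set X} {Φ : Z → X} (hU : IsOpen U) (hSA : IsClosed (S ∩ Φ ⁻¹' A))
    (hΦ : ContinuousOn Φ U) (hSU : S ⊆ U) (hB : IsClosed B) (hAB : A ∪ B = univ)
    (hUS : MapsTo Φ (U \ S) B) : frontier (S ∩ Φ ⁻¹' A) ⊆ Φ ⁻¹' (A ∩ B) := by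
  intro z hz
  obtain ⟨hzS, hzA⟩ := hSA.frontier_subset hz
  refine ⟨hzA, by_contra fun hzB => hz.2 ?_⟩
  have hopen : IsOpen (U ∩ Φ ⁻¹' Bᶜ) := hΦ.isOpen_inter_preimage hU hB.isOpen_compl
  have hsub : U ∩ Φ ⁻¹' Bᶜ ⊆ S ∩ Φ ⁻¹' A := fun w ⟨hwU, hwB⟩ =>
    ⟨by_contra fun hwS => hwB (hUS ⟨hwU, hwS⟩), (hAB.symm ▸ mem_univ (Φ w)).resolve_right hwB⟩
  exact interior_maximal hsub hopen ⟨hSU hzS, hzB⟩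

end Components

section Extension

universe u v

theorem tietzeExtension_of_isEmbedding_real {Y : Type v} [TopologicalSpace Y] [ConnectedSpace Y]
    {j : Y → ℝ} (hj : IsEmbedding j) : TietzeExtension.{u} Y := by
  have : OrdConnected (range j) := (isPreconnected_range hj.continuous).ordConnected
  have : TietzeExtension.{u} (range j) := ⟨fun s hs f => by
    obtain ⟨g, hg, hgf⟩ := ContinuousMap.exists_restrict_eq_forall_mem_of_closed
      ((ContinuousMap.mk Subtype.val).comp f) (fun x => (f x).2) (range_nonempty j) hs
    exact ⟨⟨_, g.continuous.subtype_mk hg⟩,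
      ContinuousMap.ext fun x => Subtype.ext (congrArg (· x) hgf)⟩⟩
  exact .of_homeo hj.toHomeomorph

theorem exists_isEmbedding_real_of_mem_sphere_of_ne {Y : Type*} [TopologicalSpace Y] {ι : Y → ℂ}
    (hι : IsEmbedding ι) {c p : ℂ} {r : ℝ} (hp : p ∈ Metric.sphere c r)
    (hιr : ∀ y, ι y ∈ Metric.sphere c r) (hιp : ∀ y, ι y ≠ p) :
    ∃ j : Y → ℝ, IsEmbedding j := by
  let q : Y → ℂ := fun y => (ι y - c) / (c - p)
  let param : ℝ → ℂ := fun t => c + (c - p) * Complex.exp (t * Complex.I)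
  have hcp (y : Y) : c - p ≠ 0 := fun h => hιp y <| by
    obtain rfl : c = p := sub_eq_zero.1 h
    obtain rfl : 0 = r := by simpa using hp
    simpa using hιr y
  have hq : ∀ y, ‖q y‖ = 1 := fun y => by
    rw [norm_div, mem_sphere_iff_norm.1 (hιr y), norm_sub_rev, mem_sphere_iff_norm.1 hp]
    exact div_self (mem_sphere_iff_norm.1 hp ▸ norm_sub_rev c p ▸ norm_ne_zero_iff.2 (hcp y))
  have hparam : ∀ y, param (q y).arg = ι y := fun y => by
    have hexp := Complex.norm_mul_exp_arg_mul_I (q y)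
    rw [hq, Complex.ofReal_one, one_mul] at hexp
    simp only [param, hexp, q]
    rw [mul_div_cancel₀ _ (hcp y), add_sub_cancel]
  have hslit : ∀ y, q y ∈ Complex.slitPlane := fun y => by
    refine Complex.mem_slitPlane_iff_arg.2 ⟨fun harg => hιp y ?_, norm_ne_zero_iff.1 (by simp [hq])⟩
    rw [← hparam, harg]
    simp only [param, Complex.exp_pi_mul_I]
    ring
  have harg : Continuous fun y => (q y).arg := continuous_iff_continuousAt.2 fun y =>
    (Complex.continuousAt_arg (hslit y)).comp
      ((hι.continuous.sub continuous_const).div_const _).continuousAt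
  have hcomp : param ∘ (fun y => (q y).arg) = ι := funext hparam
  exact ⟨_, .of_comp harg (by fun_prop : Continuous param) (hcomp ▸ hι)⟩

theorem exists_continuousMap_eqOn_compl {Z : Type u} {X : Type v} [TopologicalSpace Z]
    [NormalSpace Z] [TopologicalSpace X] {C : Set Z} (hC : IsOpen C) {Φ : Z → X}
    (hΦ : ContinuousOn Φ Cᶜ) {T : Set X} [TietzeExtension.{u} T] (hT : MapsTo Φ (frontier C) T) :
    ∃ Ψ : C(Z, X), EqOn Ψ Φ Cᶜ := by
  classical
  have hfrontier : frontier C ⊆ Cᶜ := (disjoint_frontier_iff_isOpen.2 hC).subset_compl_right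
  obtain ⟨g, -, hg⟩ := ContinuousMap.exists_forall_mem_restrict_eq isClosed_frontier
    ⟨_, (hΦ.mono hfrontier).domRestrict⟩ (t := T) fun z => hT z.2
  have hgΦ : EqOn g Φ (frontier C) := fun z hz => congrArg (· ⟨z, hz⟩) hg
  exact ⟨⟨C.piecewise g Φ, continuous_piecewise hgΦ g.continuous.continuousOn
    (hC.isClosed_compl.closure_eq.symm ▸ hΦ)⟩, piecewise_eqOn_compl C g Φ⟩

end Extension

section Homotopy

universe u v

variable {E : Type u} [NormedAddCommGroup E] [NormedSpace ℝ E] {X : Type v} [TopologicalSpace X]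

theorem exists_polar_spread_of_homotopic [Nonempty X] {f g : C(Metric.sphere (0 : E) 1, X)}
    (h : f.Homotopic g) :
    ∃ Φ : E → X, ContinuousOn Φ {0}ᶜ ∧ (∀ z : Metric.sphere (0 : E) 1, Φ z = f z) ∧
      ∀ z ≠ 0, ‖z‖ ≤ 1 / 2 → Φ z ∈ range g := by
  obtain ⟨H⟩ := h.symm
  let Φ : ({0}ᶜ : Set E) → X := fun z =>
    H (projIcc 0 1 zero_le_one (2 * ‖(z : E)‖ - 1), (homeomorphUnitSphereProd E z).1)
  have hΦ : Continuous Φ := by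
    refine H.continuous.comp (.prodMk (continuous_projIcc.comp (by fun_prop)) ?_)
    exact continuous_fst.comp (homeomorphUnitSphereProd E).continuous
  have hext : ∀ z (hz : z ≠ 0),
      Function.extend Subtype.val Φ (fun _ => Classical.arbitrary X) z = Φ ⟨z, hz⟩ :=
    fun z hz => Subtype.val_injective.extend_apply Φ _ ⟨z, hz⟩
  refine ⟨Function.extend Subtype.val Φ fun _ => Classical.arbitrary X, ?_, fun z => ?_,
    fun z hz hz2 => ?_⟩
  · exact continuousOn_iff_continuous_domRestrict.2 <| hΦ.congr fun z => (hext z z.2).symm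
  · have hz : ‖(z : E)‖ = 1 := norm_eq_of_mem_sphere z
    have ht : projIcc (0 : ℝ) 1 zero_le_one (2 * ‖(z : E)‖ - 1) = 1 :=
      projIcc_of_right_le _ (by linarith)
    have hz0 : (z : E) ≠ 0 := ne_zero_of_mem_unit_sphere z
    have hdir : (homeomorphUnitSphereProd E ⟨z, hz0⟩).1 = z := by
      ext; simp [hz]
    rw [hext z hz0]
    simp only [Φ, ht, hdir, H.apply_one]
  · have ht : projIcc (0 : ℝ) 1 zero_le_one (2 * ‖z‖ - 1) = 0 :=
      projIcc_of_le_left _ (by linarith)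
    rw [hext z hz]
    simp only [Φ, ht, H.apply_zero, mem_range_self]

theorem exists_closedBall_extension_of_homotopic_of_isClosed_cover (hE : 1 < Module.rank ℝ E)
    {A B : Set X} (hA : IsClosed A) (hB : IsClosed B) (hAB : A ∪ B = univ)
    (hext : ∀ T ⊆ A ∩ B, IsConnected T → TietzeExtension.{u} T)
    {f g : C(Metric.sphere (0 : E) 1, X)} (hf : ∀ z, f z ∈ A) (hg : ∀ z, g z ∈ B)
    (hfg : f.Homotopic g) :
    ∃ β : C(Metric.closedBall (0 : E) 1, X),
      ∀ z : Metric.sphere (0 : E) 1, β ⟨z, Metric.sphere_subset_closedBall z.2⟩ = f z := by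
  obtain ⟨⟨x, hx⟩, hsphere⟩ := isConnected_sphere hE 0 zero_le_one
  have : Nonempty X := ⟨f ⟨x, hx⟩⟩
  obtain ⟨Φ, hΦ, hΦf, hΦg⟩ := exists_polar_spread_of_homotopic hfg
  let F : Set E := {z | 1 / 2 ≤ ‖z‖} ∩ Φ ⁻¹' A
  have hhalf : {z : E | 1 / 2 ≤ ‖z‖} ⊆ {0}ᶜ := fun z hz => norm_pos_iff.1 (one_half_pos.trans_le hz)
  have hF : IsClosed F := (hΦ.mono hhalf).preimage_isClosed_of_isClosed
    (isClosed_le continuous_const continuous_norm) hA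
  have hsphereF : Metric.sphere (0 : E) 1 ⊆ F := fun z hz =>
    ⟨by norm_num [norm_eq_of_mem_sphere ⟨z, hz⟩], by simpa [hΦf ⟨z, hz⟩] using hf ⟨z, hz⟩⟩
  have hfrontierF : frontier F ⊆ Φ ⁻¹' (A ∩ B) :=
    frontier_inter_preimage_subset_preimage_inter isOpen_compl_singleton hF hΦ hhalf hB hAB
      fun z hz => by
        obtain ⟨x, hx⟩ := hΦg z hz.1 (le_of_not_ge hz.2)
        exact hx ▸ hg x
  obtain ⟨C, hC, h0C, hCF, hCconn, hCfrontier⟩ :=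
    exists_isOpen_isConnected_frontier_subset_frontier hF (hsphereF hx) fun h0 => hhalf h0.1 rfl
  have hsphereC : Metric.sphere (0 : E) 1 ⊆ Cᶜ :=
    (hsphere.subset_connectedComponentIn hx hsphereF).trans hCF.subset_compl_left
  have hΦC : ContinuousOn Φ Cᶜ := hΦ.mono (compl_subset_compl.2 (singleton_subset_iff.2 h0C))
  have : TietzeExtension.{u} (Φ '' frontier C) :=
    hext _ (image_subset_iff.2 (hCfrontier.trans hfrontierF))
      (hCconn.image Φ (hΦC.mono (disjoint_frontier_iff_isOpen.2 hC).subset_compl_right))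
  obtain ⟨Ψ, hΨ⟩ := exists_continuousMap_eqOn_compl hC hΦC (mapsTo_image Φ (frontier C))
  exact ⟨Ψ.restrict _, fun z => (hΨ (hsphereC z.2)).trans (hΦf z)⟩

end Homotopy

theorem essential_loop_not_homotoped_off_general
    (X : Set ℂ) (c : ℂ) (r : ℝ) (hbd : ¬ Metric.sphere c r ⊆ X)
    (α : C(Metric.sphere (0 : ℂ) 1, X))
    (him : ∀ z, (α z : ℂ) ∈ Metric.closedBall c r)
    (hess : ¬ ∃ β : C(Metric.closedBall (0 : ℂ) 1, X),
      ∀ z : Metric.sphere (0 : ℂ) 1, β ⟨z, Metric.sphere_subset_closedBall z.2⟩ = α z) :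
    ¬ ∃ (g : C(Metric.sphere (0 : ℂ) 1, X)) (_ : α.Homotopic g),
        ∀ z, (g z : ℂ) ∉ Metric.ball c r := by
  rintro ⟨g, hαg, hg⟩
  obtain ⟨p, hp, hpX⟩ := not_subset.1 hbd
  let A : Set X := (↑) ⁻¹' Metric.closedBall c r
  let B : Set X := (↑) ⁻¹' (Metric.ball c r)ᶜ
  have hAB : A ∪ B = univ := by
    rw [← preimage_union]
    exact eq_univ_of_forall fun x => (em _).imp (Metric.ball_subset_closedBall ·) id
  have harc (T : Set X) (hTAB : T ⊆ A ∩ B) (hT : IsConnected T) : TietzeExtension.{0} T := by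
    have : ConnectedSpace T := isConnected_iff_connectedSpace.1 hT
    obtain ⟨j, hj⟩ := exists_isEmbedding_real_of_mem_sphere_of_ne
      (IsEmbedding.subtypeVal.comp (IsEmbedding.subtypeVal (p := (· ∈ T)))) hp
      (fun x => (hTAB x.2).1.antisymm (not_lt.1 (hTAB x.2).2)) fun x hxp => hpX (hxp ▸ x.1.2)
    exact tietzeExtension_of_isEmbedding_real hj
  exact hess <| exists_closedBall_extension_of_homotopic_of_isClosed_cover
    (by simp [Complex.rank_real_complex])
    (Metric.isClosed_closedBall.preimage continuous_subtype_val)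
    (Metric.isOpen_ball.isClosed_compl.preimage continuous_subtype_val) hAB harc him hg hαg

/-- Lemma `homotoped off`: let `X ⊆ ℝ²` and let `U` be a closed disk whose boundary circle is
not contained in `X`. An essential loop in `X ∩ int U` cannot be freely homotoped in `X` out
of `U ∩ X`. -/
theorem essential_loop_not_homotoped_off
    (X : Set ℂ) (c : ℂ) (r : ℝ) (hr : 0 < r)
    (hbd : ¬ Metric.sphere c r ⊆ X)
    (α : C(Metric.sphere (0 : ℂ) 1, X))
    (him : ∀ z, (α z : ℂ) ∈ Metric.ball c r)
    (hess : ¬ ∃ β : C(Metric.closedBall (0 : ℂ) 1, X),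
      ∀ z : Metric.sphere (0 : ℂ) 1, β ⟨z, Metric.sphere_subset_closedBall z.2⟩ = α z) :
    ¬ ∃ (g : C(Metric.sphere (0 : ℂ) 1, X)) (_ : α.Homotopic g),
        ∀ z, (g z : ℂ) ∉ Metric.closedBall c r := by
  rintro ⟨g, hαg, hg⟩
  exact essential_loop_not_homotoped_off_general X c r hbd α
    (fun z => Metric.ball_subset_closedBall (him z)) hess
    ⟨g, hαg, fun z hz => hg z (Metric.ball_subset_closedBall hz)⟩
end
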